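/- arXiv:1205.1174 — 2 statements merged into one kernel-verified Lean document; each statement's English description precedes it below -/
import Mathlib

section
/- Let (X, μ) be a standard Borel probability space and let M be a set of admissible summable semimetrics on X that is precompact in the m-norm. Then the closure of M in L¹(X×X, μ×μ) coincides with its closure in the m-norm and consists only of admissible semimetrics; moreover, for every fixed ε>0 the ε-entropies H_ε(ρ, μ), ρ ∈ M, are uniformly bounded. In particular, if a sequence of admissible summable semimetrics converges in L¹ to an admissible semimetric, then for every ε>0 the ε-entropies of the members of the sequence are uniformly bounded. -/
open MeasureTheory Filter Function Set
open scoped ENNReal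

/-- A semimetric on `X`: a nonnegative function vanishing on the diagonal, symmetric and
satisfying the triangle inequality for all points. -/
def IsSemimetric {X : Type*} (ρ : X → X → ℝ) : Prop :=
  (∀ x y, 0 ≤ ρ x y) ∧ (∀ x, ρ x x = 0) ∧ (∀ x y, ρ x y = ρ y x) ∧
    ∀ x y z, ρ x z ≤ ρ x y + ρ y z

/-- A metric on `X`: a semimetric that separates points. -/
def IsMetricFun {X : Type*} (ρ : X → X → ℝ) : Prop :=
  IsSemimetric ρ ∧ ∀ x y, ρ x y = 0 ↔ x = y

/-- The semimetric space `(S, ρ)` is separable. -/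
def SeparableOn {X : Type*} (ρ : X → X → ℝ) (S : Set X) : Prop :=
  ∃ D : Set X, D ⊆ S ∧ D.Countable ∧ ∀ x ∈ S, ∀ ε : ℝ, 0 < ε → ∃ y ∈ D, ρ x y < ε

/-- A semimetric is admissible for `(X, μ)` if it is measurable on `(X × X, μ × μ)` and
separable on a subset of full measure. -/
def Admissible {X : Type*} [MeasurableSpace X] (μ : Measure X) (ρ : X → X → ℝ) : Prop :=
  Measurable (Function.uncurry ρ) ∧
    ∃ S : Set X, MeasurableSet S ∧ μ Sᶜ = 0 ∧ SeparableOn ρ S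

/-- An `ε`-cover of size `k`: `X = X₀ ∪ X₁ ∪ ⋯ ∪ X_k` with `μ(X₀) < ε` and
`diam_ρ(X_j) < ε` for `j = 1, …, k`. -/
def IsEpsCover {X : Type*} [MeasurableSpace X] (μ : Measure X) (ρ : X → X → ℝ)
    (ε : ℝ) (k : ℕ) : Prop :=
  ∃ A : Fin (k + 1) → Set X, (∀ i, MeasurableSet (A i)) ∧ (⋃ i, A i) = Set.univ ∧
    μ (A 0) < ENNReal.ofReal ε ∧
    ∀ i, i ≠ 0 → ∀ x ∈ A i, ∀ y ∈ A i, ρ x y < ε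

/-- The `ε`-entropy of `(X, μ, ρ)`: the binary logarithm of the smallest size of an
`ε`-cover, and `∞` if there is no finite `ε`-cover. -/
noncomputable def epsEntropy {X : Type*} [MeasurableSpace X] (μ : Measure X)
    (ρ : X → X → ℝ) (ε : ℝ) : ℝ≥0∞ :=
  sInf {h : ℝ≥0∞ | ∃ k : ℕ, IsEpsCover μ ρ ε k ∧ h = ENNReal.ofReal (Real.logb 2 k)}

/-- The m-norm of `f`: the infimum of the `L¹`-norms of measurable semimetrics
dominating `|f|` almost everywhere (`∞` if there is no such semimetric). -/
noncomputable def mnorm {X : Type*} [MeasurableSpace X] (μ : Measure X)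
    (f : X → X → ℝ) : ℝ≥0∞ :=
  sInf {c : ℝ≥0∞ | ∃ ρ : X → X → ℝ, IsSemimetric ρ ∧ Measurable (Function.uncurry ρ) ∧
    (∀ᵐ p ∂(μ.prod μ), |f p.1 p.2| ≤ ρ p.1 p.2) ∧
    c = ∫⁻ p, ENNReal.ofReal (ρ p.1 p.2) ∂(μ.prod μ)}

/-- The m-distance between two functions. -/
noncomputable def mdist {X : Type*} [MeasurableSpace X] (μ : Measure X)
    (f g : X → X → ℝ) : ℝ≥0∞ :=
  mnorm μ fun x y => f x y - g x y

/-- The `L¹(X × X, μ × μ)` distance between two functions. -/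
noncomputable def L1dist {X : Type*} [MeasurableSpace X] (μ : Measure X)
    (f g : X → X → ℝ) : ℝ≥0∞ :=
  ∫⁻ p, ENNReal.ofReal |f p.1 p.2 - g p.1 p.2| ∂(μ.prod μ)

/-- Total boundedness (precompactness) of a set of functions w.r.t. an extended distance. -/
def TotallyBoundedIn {X : Type*} (d : (X → X → ℝ) → (X → X → ℝ) → ℝ≥0∞)
    (M : Set (X → X → ℝ)) : Prop :=
  ∀ ε : ℝ≥0∞, 0 < ε → ∃ T : Set (X → X → ℝ), T.Finite ∧ ∀ f ∈ M, ∃ g ∈ T, d f g < ε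

lemma limsup_add_le_ennreal (a b : ℕ → ℝ≥0∞) :
    limsup (a + b) atTop ≤ limsup a atTop + limsup b atTop := by
  have hanti : ∀ c : ℕ → ℝ≥0∞, Antitone fun n => ⨆ i ≥ n, c i := fun c m n hmn =>
    biSup_mono fun _ hi => hmn.trans hi
  simp only [limsup_eq_iInf_iSup_of_nat]
  rw [ENNReal.iInf_add_iInf fun i j => ⟨max i j,
    add_le_add (hanti a (le_max_left i j)) (hanti b (le_max_right i j))⟩]
  exact iInf_mono fun n => iSup₂_le fun i hi =>
    add_le_add (le_iSup₂ (f := fun i (_ : i ≥ n) => a i) i hi)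
      (le_iSup₂ (f := fun i (_ : i ≥ n) => b i) i hi)

lemma IsSemimetric.add {X : Type*} {ρ τ : X → X → ℝ} (hρ : IsSemimetric ρ) (hτ : IsSemimetric τ) :
    IsSemimetric fun x y => ρ x y + τ x y := by
  refine ⟨fun x y => add_nonneg (hρ.1 x y) (hτ.1 x y), fun x => ?_, fun x y => ?_,
    fun x y z => ?_⟩
  · simp [hρ.2.1, hτ.2.1]
  · simp [hρ.2.2.1 x y, hτ.2.2.1 x y]
  · have h1 := hρ.2.2.2 x y z
    have h2 := hτ.2.2.2 x y z
    simp only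
    linarith

section

variable {X : Type*} [MeasurableSpace X] {μ : Measure X}

lemma IsEpsCover.of_centers {ρ : X → X → ℝ} (hρ : IsSemimetric ρ)
    (hm : Measurable (uncurry ρ)) {ε : ℝ} {k : ℕ} (c : Fin k → X)
    (h : μ {y | ∀ j, ε / 2 ≤ ρ (c j) y} < ENNReal.ofReal ε) : IsEpsCover μ ρ ε k := by
  have hsec : ∀ x, Measurable (ρ x) := fun x => hm.comp measurable_prodMk_left
  refine ⟨Fin.cons {y | ∀ j, ε / 2 ≤ ρ (c j) y} fun j => {y | ρ (c j) y < ε / 2},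
    ?_, ?_, ?_, ?_⟩
  · intro i
    refine Fin.cases ?_ (fun j => ?_) i
    · rw [Fin.cons_zero, ofPred_forall]
      exact MeasurableSet.iInter fun j => measurableSet_le measurable_const (hsec _)
    · rw [Fin.cons_succ]
      exact measurableSet_lt (hsec _) measurable_const
  · refine eq_univ_of_forall fun y => mem_iUnion.2 ?_
    by_cases hy : ∀ j, ε / 2 ≤ ρ (c j) y
    · exact ⟨0, by simpa using hy⟩
    · push Not at hy
      obtain ⟨j, hj⟩ := hy
      exact ⟨j.succ, by simpa using hj⟩
  · simpa using h
  · intro i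
    refine Fin.cases (fun h0 => absurd rfl h0) (fun j _ x hx y hy => ?_) i
    simp only [Fin.cons_succ, mem_ofPred_eq] at hx hy
    have h1 := hρ.2.2.2 x (c j) y
    rw [hρ.2.2.1 x (c j)] at h1
    linarith

lemma Admissible.exists_isEpsCover [IsProbabilityMeasure μ] {ρ : X → X → ℝ}
    (hρ : IsSemimetric ρ) (ha : Admissible μ ρ) {ε : ℝ} (hε : 0 < ε) :
    ∃ k, IsEpsCover μ ρ ε k := by
  obtain ⟨hm, S, -, hS, D, -, hDc, hD⟩ := ha
  have hsec : ∀ x, Measurable (ρ x) := fun x => hm.comp measurable_prodMk_left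
  have hSne : S.Nonempty := by
    by_contra h
    rw [not_nonempty_iff_eq_empty] at h
    simp [h] at hS
  obtain ⟨x, hx⟩ := hSne
  obtain ⟨y, hy, -⟩ := hD x hx 1 one_pos
  obtain ⟨d, hd⟩ := hDc.exists_eq_range ⟨y, hy⟩
  let B : ℕ → Set X := fun n => {y | ∀ j < n, ε / 2 ≤ ρ (d j) y}
  have hBm : ∀ n, MeasurableSet (B n) := fun n => by
    simp only [B, ofPred_forall]
    exact MeasurableSet.iInter fun j => MeasurableSet.iInter fun _ =>
      measurableSet_le measurable_const (hsec _)
  have hanti : Antitone B := fun m n hmn y hy j hj => hy j (hj.trans_le hmn)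
  have hnull : μ (⋂ n, B n) = 0 := by
    refine measure_mono_null (t := Sᶜ) ?_ hS
    intro y hy hyS
    obtain ⟨z, hz, hzy⟩ := hD y hyS (ε / 2) (half_pos hε)
    rw [hd] at hz
    obtain ⟨j, rfl⟩ := hz
    have := mem_iInter.1 hy (j + 1) j (Nat.lt_succ_self j)
    rw [hρ.2.2.1] at this
    linarith
  have ht := tendsto_measure_iInter_atTop (μ := μ) (fun n => (hBm n).nullMeasurableSet) hanti
    ⟨0, measure_ne_top _ _⟩
  rw [hnull] at ht
  obtain ⟨n, hn⟩ := (ht.eventually_lt_const (ENNReal.ofReal_pos.2 hε)).exists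
  refine ⟨n, IsEpsCover.of_centers hρ hm (fun j : Fin n => d j) ?_⟩
  refine lt_of_le_of_lt (measure_mono fun y hy j hj => hy ⟨j, hj⟩) hn

lemma IsEpsCover.epsEntropy_le {ρ : X → X → ℝ} {ε : ℝ} {k : ℕ} (h : IsEpsCover μ ρ ε k) :
    epsEntropy μ ρ ε ≤ ENNReal.ofReal (Real.logb 2 k) :=
  sInf_le ⟨k, h, rfl⟩

lemma exists_semimetric_of_mdist_lt {f g : X → X → ℝ} {c : ℝ≥0∞} (h : mdist μ f g < c) :
    ∃ τ : X → X → ℝ, IsSemimetric τ ∧ Measurable (uncurry τ) ∧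
      (∀ᵐ p ∂(μ.prod μ), |f p.1 p.2 - g p.1 p.2| ≤ τ p.1 p.2) ∧
      ∫⁻ p, ENNReal.ofReal (τ p.1 p.2) ∂(μ.prod μ) < c := by
  obtain ⟨_, ⟨τ, h1, h2, h3, rfl⟩, h4⟩ := sInf_lt_iff.1 h
  exact ⟨τ, h1, h2, h3, h4⟩

lemma mdist_le_of_semimetric {f g τ : X → X → ℝ} (hτ : IsSemimetric τ)
    (hm : Measurable (uncurry τ))
    (h : ∀ᵐ p ∂(μ.prod μ), |f p.1 p.2 - g p.1 p.2| ≤ τ p.1 p.2) :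
    mdist μ f g ≤ ∫⁻ p, ENNReal.ofReal (τ p.1 p.2) ∂(μ.prod μ) :=
  sInf_le ⟨τ, hτ, hm, h, rfl⟩

lemma mdist_lt_add {f g h : X → X → ℝ} {a b : ℝ≥0∞} (hf : mdist μ f g < a)
    (hh : mdist μ h g < b) : mdist μ f h < a + b := by
  obtain ⟨τ, h1, h2, h3, h4⟩ := exists_semimetric_of_mdist_lt hf
  obtain ⟨σ, k1, k2, k3, k4⟩ := exists_semimetric_of_mdist_lt hh
  have hle := mdist_le_of_semimetric (μ := μ) (f := f) (g := h) (h1.add k1) (h2.add k2) (by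
    filter_upwards [h3, k3] with p hp kp
    rw [abs_le] at hp kp ⊢
    constructor <;> linarith)
  refine hle.trans_lt ?_
  simp_rw [ENNReal.ofReal_add (h1.1 _ _) (k1.1 _ _)]
  rw [lintegral_add_left (show Measurable fun p : X × X => ENNReal.ofReal (τ p.1 p.2) from
    ENNReal.measurable_ofReal.comp h2)]
  exact ENNReal.add_lt_add h4 k4

lemma L1dist_le_mdist (f g : X → X → ℝ) : L1dist μ f g ≤ mdist μ f g := by
  refine le_sInf ?_
  rintro _ ⟨τ, -, -, h, rfl⟩
  exact lintegral_mono_ae (h.mono fun p hp => ENNReal.ofReal_le_ofReal hp)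

lemma IsEpsCover.of_mdist_lt [IsProbabilityMeasure μ] {ρ g : X → X → ℝ}
    (hρ : IsSemimetric ρ) (hm : Measurable (uncurry ρ)) {ε : ℝ} (hε : 0 < ε) {k : ℕ}
    (hg : IsEpsCover μ g (ε / 8) k)
    (hd : mdist μ ρ g < ENNReal.ofReal (ε / 8) * ENNReal.ofReal (ε / 8)) :
    IsEpsCover μ ρ ε k := by
  obtain ⟨τ, hτ, hτm, hle, hint⟩ := exists_semimetric_of_mdist_lt hd
  obtain ⟨A, hA, hAu, hA0, hAd⟩ := hg
  have hτm' : Measurable fun p : X × X => ENNReal.ofReal (τ p.1 p.2) :=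
    ENNReal.measurable_ofReal.comp hτm
  rw [lintegral_prod _ hτm'.aemeasurable] at hint
  obtain ⟨x₀, hx₀⟩ : ∃ x, ∫⁻ y, ENNReal.ofReal (τ x y) ∂μ
      < ENNReal.ofReal (ε / 8) * ENNReal.ofReal (ε / 8) := by
    by_contra! h
    have := lintegral_mono (μ := μ) h
    rw [lintegral_const, measure_univ, mul_one] at this
    exact absurd hint (not_lt.2 this)
  let B : Set X := {y | ENNReal.ofReal (ε / 8) ≤ ENNReal.ofReal (τ x₀ y)}
  have hB : μ B < ENNReal.ofReal (ε / 8) := by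
    have h1 := mul_meas_ge_le_lintegral (μ := μ) (hτm'.comp (measurable_prodMk_left (x := x₀)))
      (ENNReal.ofReal (ε / 8))
    exact lt_of_mul_lt_mul_left' (h1.trans_lt hx₀)
  have hBc : ∀ y, y ∉ B → τ x₀ y < ε / 8 := fun y hy => by
    by_contra h
    exact hy (ENNReal.ofReal_le_ofReal (not_lt.1 h))
  have hae := Measure.ae_ae_of_ae_prod hle
  have hc : ∀ j : Fin k, ∃ c, μ {y | y ∈ A j.succ ∧ y ∉ B ∧ ε / 2 ≤ ρ c y} = 0 := by
    intro j
    by_cases h0 : μ (A j.succ \ B) = 0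
    · exact ⟨x₀, measure_mono_null (t := A j.succ \ B) (fun y hy => ⟨hy.1, hy.2.1⟩) h0⟩
    · obtain ⟨c, hcA, hc⟩ : ∃ c ∈ A j.succ \ B, ∀ᵐ y ∂μ, |ρ c y - g c y| ≤ τ c y := by
        by_contra h
        refine h0 (measure_mono_null ?_ (ae_iff.1 hae))
        intro x hx hx'
        exact h ⟨x, hx, hx'⟩
      refine ⟨c, measure_mono_null ?_ (ae_iff.1 hc)⟩
      intro y hy hyle
      have h1 := hAd j.succ (Fin.succ_ne_zero j) c hcA.1 y hy.1
      have h2 := hBc c hcA.2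
      have h3 := hBc y hy.2.1
      have h4 := hτ.2.2.2 c x₀ y
      rw [hτ.2.2.1 c x₀] at h4
      have h5 := (abs_le.1 hyle).2
      have h6 := hy.2.2
      linarith
  choose c hc using hc
  refine IsEpsCover.of_centers hρ hm c ?_
  have hsub : {y | ∀ j, ε / 2 ≤ ρ (c j) y} ⊆
      (A 0 ∪ B) ∪ ⋃ j : Fin k, {y | y ∈ A j.succ ∧ y ∉ B ∧ ε / 2 ≤ ρ (c j) y} := by
    intro y hy
    by_cases hyB : y ∈ B
    · exact Or.inl (Or.inr hyB)
    obtain ⟨i, hi⟩ := mem_iUnion.1 (hAu ▸ mem_univ y)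
    revert hi
    refine Fin.cases (fun hi => Or.inl (Or.inl hi)) (fun j hi => ?_) i
    exact Or.inr (mem_iUnion.2 ⟨j, hi, hyB, hy j⟩)
  calc _ ≤ _ := measure_mono hsub
    _ ≤ μ (A 0 ∪ B) + μ (⋃ j : Fin k, {y | y ∈ A j.succ ∧ y ∉ B ∧ ε / 2 ≤ ρ (c j) y}) :=
      measure_union_le _ _
    _ = μ (A 0 ∪ B) := by rw [measure_iUnion_null hc, add_zero]
    _ ≤ μ (A 0) + μ B := measure_union_le _ _
    _ < ENNReal.ofReal (ε / 8) + ENNReal.ofReal (ε / 8) := ENNReal.add_lt_add hA0 hB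
    _ = ENNReal.ofReal (ε / 8 + ε / 8) := (ENNReal.ofReal_add (by positivity) (by positivity)).symm
    _ ≤ ENNReal.ofReal ε := ENNReal.ofReal_le_ofReal (by linarith)

lemma IsEpsCover.of_L1dist_lt [IsProbabilityMeasure μ] {ρ g : X → X → ℝ}
    (hρ : IsSemimetric ρ) (hm : Measurable (uncurry ρ)) (hgm : Measurable (uncurry g))
    {ε : ℝ} (hε : 0 < ε) {k : ℕ} (hg : IsEpsCover μ g (ε / 8) k)
    (hd : L1dist μ ρ g < ENNReal.ofReal (ε / 8) * ENNReal.ofReal (ε / (8 * (k + 1))) *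
      ENNReal.ofReal (ε / (8 * (k + 1)))) :
    IsEpsCover μ ρ ε k := by
  obtain ⟨A, hA, hAu, hA0, hAd⟩ := hg
  set η := ENNReal.ofReal (ε / (8 * (k + 1))) with hη
  have hfm : Measurable fun p : X × X => ENNReal.ofReal |ρ p.1 p.2 - g p.1 p.2| :=
    ENNReal.measurable_ofReal.comp (hm.sub hgm).abs
  obtain ⟨x₀⟩ : Nonempty X := nonempty_of_isProbabilityMeasure μ
  rw [L1dist, lintegral_prod _ hfm.aemeasurable] at hd
  have hc : ∀ j : Fin k, ∃ c, μ {y | y ∈ A j.succ ∧ ε / 2 ≤ ρ c y} ≤ η := by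
    intro j
    by_contra! h
    have hAη : η < μ (A j.succ) := (h x₀).trans_le (measure_mono fun y hy => hy.1)
    refine absurd hd (not_lt.2 ?_)
    calc ENNReal.ofReal (ε / 8) * η * η ≤ ENNReal.ofReal (ε / 8) * η * μ (A j.succ) := by gcongr
      _ = ∫⁻ _ in A j.succ, ENNReal.ofReal (ε / 8) * η ∂μ := (setLIntegral_const _ _).symm
      _ ≤ ∫⁻ x in A j.succ, ∫⁻ y, ENNReal.ofReal |ρ x y - g x y| ∂μ ∂μ := by
        refine setLIntegral_mono' (hA _) fun x hx => ?_
        refine le_trans ?_ (mul_meas_ge_le_lintegral (μ := μ)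
          (hfm.comp (measurable_prodMk_left (x := x))) (ENNReal.ofReal (ε / 8)))
        refine mul_le_mul_right ((h x).le.trans (measure_mono fun y hy => ?_)) _
        refine ENNReal.ofReal_le_ofReal ?_
        have h1 := hAd j.succ (Fin.succ_ne_zero j) x hx y hy.1
        have h2 := le_abs_self (ρ x y - g x y)
        have h3 := hy.2
        simp only
        linarith
      _ ≤ _ := setLIntegral_le_lintegral _ _
  choose c hc using hc
  refine IsEpsCover.of_centers hρ hm c ?_
  have hsub : {y | ∀ j, ε / 2 ≤ ρ (c j) y} ⊆
      A 0 ∪ ⋃ j : Fin k, {y | y ∈ A j.succ ∧ ε / 2 ≤ ρ (c j) y} := by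
    intro y hy
    obtain ⟨i, hi⟩ := mem_iUnion.1 (hAu ▸ mem_univ y)
    revert hi
    refine Fin.cases (fun hi => Or.inl hi) (fun j hi => ?_) i
    exact Or.inr (mem_iUnion.2 ⟨j, hi, hy j⟩)
  have hsum : (k : ℝ≥0∞) * η ≤ ENNReal.ofReal (ε / 8) := by
    rw [hη, ← ENNReal.ofReal_natCast k, ← ENNReal.ofReal_mul (by positivity)]
    refine ENNReal.ofReal_le_ofReal ?_
    rw [← mul_div_assoc, div_le_div_iff₀ (by positivity) (by positivity)]
    nlinarith
  calc _ ≤ _ := measure_mono hsub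
    _ ≤ μ (A 0) + μ (⋃ j : Fin k, {y | y ∈ A j.succ ∧ ε / 2 ≤ ρ (c j) y}) :=
      measure_union_le _ _
    _ ≤ μ (A 0) + ∑ j : Fin k, μ {y | y ∈ A j.succ ∧ ε / 2 ≤ ρ (c j) y} := by
      gcongr
      exact measure_iUnion_fintype_le _ _
    _ ≤ μ (A 0) + ∑ _j : Fin k, η := by gcongr; exact hc _
    _ ≤ μ (A 0) + ENNReal.ofReal (ε / 8) := by
      gcongr
      simpa using hsum
    _ < ENNReal.ofReal (ε / 8) + ENNReal.ofReal (ε / 8) :=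
      ENNReal.add_lt_add_of_lt_of_le ENNReal.ofReal_ne_top hA0 le_rfl
    _ = ENNReal.ofReal (ε / 8 + ε / 8) := (ENNReal.ofReal_add (by positivity) (by positivity)).symm
    _ ≤ ENNReal.ofReal ε := ENNReal.ofReal_le_ofReal (by linarith)

lemma Admissible.of_isEpsCover {ρ : X → X → ℝ}
    (hm : Measurable (uncurry ρ)) (h : ∀ ε : ℝ, 0 < ε → ∃ k, IsEpsCover μ ρ ε k) :
    Admissible μ ρ := by
  have hpos : ∀ n : ℕ, (0 : ℝ) < 1 / ((n : ℝ) + 1) := fun n => Nat.one_div_pos_of_nat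
  choose k A hA hAu hA0 hAd using fun n : ℕ => h _ (hpos n)
  have hlim : Tendsto (fun n : ℕ => (1 : ℝ) / ((n : ℝ) + 1)) atTop (nhds 0) :=
    tendsto_one_div_add_atTop_nhds_zero_nat
  let S : Set X := ⋂ N : ℕ, ⋃ n ≥ N, (A n 0)ᶜ
  have hSc : μ Sᶜ = 0 := by
    have : Sᶜ = ⋃ N : ℕ, ⋂ n ≥ N, A n 0 := by simp [S]
    rw [this, measure_iUnion_null_iff]
    intro N
    have hl : Tendsto (fun n : ℕ => ENNReal.ofReal (1 / ((n : ℝ) + 1))) atTop (nhds 0) := by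
      simpa using ENNReal.tendsto_ofReal hlim
    refine le_antisymm (ge_of_tendsto hl ?_) zero_le
    filter_upwards [eventually_ge_atTop N] with n hn
    exact (measure_mono (iInter₂_subset n hn)).trans (hA0 n).le
  refine ⟨hm, S, ?_, hSc, ?_⟩
  · exact MeasurableSet.iInter fun N => MeasurableSet.iUnion fun n => MeasurableSet.iUnion fun _ =>
      (hA n 0).compl
  let I : Set (Σ n : ℕ, Fin (k n + 1)) := {i | (A i.1 i.2 ∩ S).Nonempty}
  choose d hd using fun i : I => i.2
  refine ⟨range d, ?_, countable_range d, ?_⟩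
  · rintro _ ⟨i, rfl⟩
    exact (hd i).2
  · intro x hx ε hε
    obtain ⟨N, hN⟩ := (hlim.eventually_lt_const hε).exists_forall_of_atTop
    obtain ⟨n, hn, hxn⟩ := mem_iUnion₂.1 (mem_iInter.1 hx N)
    obtain ⟨i, hi⟩ := mem_iUnion.1 (hAu n ▸ mem_univ x)
    have hi0 : i ≠ 0 := by
      rintro rfl
      exact hxn hi
    let i' : I := ⟨⟨n, i⟩, ⟨x, hi, hx⟩⟩
    exact ⟨d i', mem_range_self _, (hAd n i hi0 x hi _ (hd i').1).trans (hN n hn)⟩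

lemma exists_semimetric_ae_eq_of_ennreal [IsProbabilityMeasure μ] {τ : X → X → ℝ≥0∞}
    (hm : Measurable (uncurry τ)) (h0 : ∀ x, τ x x = 0) (hs : ∀ x y, τ x y = τ y x)
    (ht : ∀ x y z, τ x z ≤ τ x y + τ y z) (hfin : ∀ᵐ p ∂(μ.prod μ), τ p.1 p.2 < ∞) :
    ∃ ρ : X → X → ℝ, IsSemimetric ρ ∧ Measurable (uncurry ρ) ∧
      ∀ᵐ p ∂(μ.prod μ), ENNReal.ofReal (ρ p.1 p.2) = τ p.1 p.2 := by
  classical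
  obtain ⟨x₀, hx₀⟩ := (Measure.ae_ae_of_ae_prod hfin).exists
  let E : Set X := {y | τ x₀ y < ∞}
  have hE : MeasurableSet E :=
    measurableSet_lt (hm.comp (measurable_prodMk_left (x := x₀))) measurable_const
  let π : X → X := fun y => if y ∈ E then y else x₀
  have hπm : Measurable π := Measurable.ite hE measurable_id measurable_const
  have hπE : ∀ y, τ x₀ (π y) ≠ ∞ := fun y => by
    by_cases hy : y ∈ E
    · simpa [π, hy] using ne_of_lt hy
    · simp [π, hy, h0]
  have hπ : ∀ x y, τ (π x) (π y) ≠ ∞ := fun x y =>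
    ne_top_of_le_ne_top (ENNReal.add_ne_top.2 ⟨hs x₀ (π x) ▸ hπE x, hπE y⟩) (ht _ x₀ _)
  refine ⟨fun x y => (τ (π x) (π y)).toReal, ⟨fun _ _ => ENNReal.toReal_nonneg, fun x => ?_,
    fun x y => ?_, fun x y z => ?_⟩, ?_, ?_⟩
  · simp [h0]
  · simp [hs (π x) (π y)]
  · rw [← ENNReal.toReal_add (hπ _ _) (hπ _ _)]
    exact ENNReal.toReal_mono (ENNReal.add_ne_top.2 ⟨hπ _ _, hπ _ _⟩) (ht _ _ _)
  · exact (hm.comp ((hπm.comp measurable_fst).prodMk (hπm.comp measurable_snd))).ennreal_toReal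
  · have hE1 : ∀ᵐ p ∂(μ.prod μ), p.1 ∈ E := Measure.quasiMeasurePreserving_fst.ae hx₀
    have hE2 : ∀ᵐ p ∂(μ.prod μ), p.2 ∈ E := Measure.quasiMeasurePreserving_snd.ae hx₀
    filter_upwards [hE1, hE2] with p h1 h2
    rw [ENNReal.ofReal_toReal (hπ _ _)]
    simp [π, h1, h2]

lemma ae_tendsto_of_tsum_L1dist_ne_top [SFinite μ] {f : X → X → ℝ} {v : ℕ → X → X → ℝ}
    (hf : Measurable (uncurry f)) (hv : ∀ n, Measurable (uncurry (v n)))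
    (hsum : ∑' n, L1dist μ f (v n) ≠ ∞) :
    ∀ᵐ p ∂(μ.prod μ), Tendsto (fun n => v n p.1 p.2) atTop (nhds (f p.1 p.2)) := by
  have hm : ∀ n, Measurable fun p : X × X => ENNReal.ofReal |f p.1 p.2 - v n p.1 p.2| :=
    fun n => ENNReal.measurable_ofReal.comp (hf.sub (hv n)).abs
  simp only [L1dist] at hsum
  rw [← lintegral_tsum fun n => (hm n).aemeasurable] at hsum
  filter_upwards [ae_lt_top (Measurable.tsum hm) hsum] with p hp
  have h1 := ENNReal.tendsto_atTop_zero_of_tsum_ne_top hp.ne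
  have h2 := (ENNReal.tendsto_toReal ENNReal.zero_ne_top).comp h1
  simp only [comp_def, ENNReal.toReal_ofReal (abs_nonneg _), ENNReal.toReal_zero] at h2
  rw [tendsto_iff_dist_tendsto_zero]
  simpa [Real.dist_eq, abs_sub_comm] using h2

lemma exists_mdist_fast_cauchy {M : Set (X → X → ℝ)} (hpre : TotallyBoundedIn (mdist μ) M)
    {f : X → X → ℝ} (hf : ∀ ε : ℝ≥0∞, 0 < ε → ∃ σ ∈ M, L1dist μ f σ < ε) {δ : ℕ → ℝ≥0∞}
    (hδ : ∀ n, 0 < δ n) :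
    ∃ v : ℕ → X → X → ℝ, (∀ n, v n ∈ M) ∧ (∀ n, L1dist μ f (v n) < δ n) ∧
      ∀ n, mdist μ (v n) (v (n + 1)) < δ n + δ n := by
  have hη : ∀ n, 0 < (Finset.range (n + 1)).inf' ⟨0, by simp⟩ δ := fun n =>
    (Finset.lt_inf'_iff _).2 fun i _ => hδ i
  choose u huM hu using fun n => hf _ (hη n)
  have hu' : ∀ m n, m ≤ n → L1dist μ f (u n) < δ m := fun m n hmn =>
    (hu n).trans_le (Finset.inf'_le _ (by simpa using Nat.lt_succ_of_le hmn))
  have hnet : ∀ m, ∃ g, ∀ᶠ i in (hyperfilter ℕ : Filter ℕ), mdist μ (u i) g < δ m := by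
    intro m
    obtain ⟨T, hT, hTM⟩ := hpre (δ m) (hδ m)
    have : ∀ᶠ i in (hyperfilter ℕ : Filter ℕ), ∃ g ∈ T, mdist μ (u i) g < δ m :=
      Eventually.of_forall fun i => hTM _ (huM i)
    obtain ⟨g, -, hg⟩ := (Ultrafilter.eventually_exists_mem_iff hT).1 this
    exact ⟨g, hg⟩
  choose g hg using hnet
  have hex : ∀ n, ∃ i, n ≤ i ∧ ∀ m ∈ Finset.range (n + 1), mdist μ (u i) (g m) < δ m := by
    intro n
    have h1 : ∀ᶠ i in (hyperfilter ℕ : Filter ℕ), n ≤ i :=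
      Nat.hyperfilter_le_atTop (eventually_ge_atTop n)
    have h2 : ∀ᶠ i in (hyperfilter ℕ : Filter ℕ), ∀ m ∈ Finset.range (n + 1),
        mdist μ (u i) (g m) < δ m :=
      (Filter.eventually_all_finset _).2 fun m _ => hg m
    exact (h1.and h2).exists
  choose i hi hig using hex
  refine ⟨fun n => u (i n), fun n => huM _, fun n => hu' n _ (hi n), fun n => ?_⟩
  exact mdist_lt_add (hig n n (by simp)) (hig (n + 1) n (by simp))

lemma mdist_le_tsum_of_fast_cauchy [IsProbabilityMeasure μ] {f : X → X → ℝ}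
    {v : ℕ → X → X → ℝ}
    (hlim : ∀ᵐ p ∂(μ.prod μ), Tendsto (fun n => v n p.1 p.2) atTop (nhds (f p.1 p.2)))
    {δ : ℕ → ℝ≥0∞} (hd : ∀ n, mdist μ (v n) (v (n + 1)) < δ n) (hsum : ∑' n, δ n ≠ ∞) :
    mdist μ f (v 0) ≤ ∑' n, δ n := by
  choose τ hτ hτm hle hint using fun n => exists_semimetric_of_mdist_lt (hd n)
  let s : X → X → ℝ≥0∞ := fun x y => ∑' n, ENNReal.ofReal (τ n x y)
  have hm : ∀ n, Measurable fun p : X × X => ENNReal.ofReal (τ n p.1 p.2) :=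
    fun n => ENNReal.measurable_ofReal.comp (hτm n)
  have hsm : Measurable (uncurry s) := Measurable.tsum hm
  have hsint : ∫⁻ p, s p.1 p.2 ∂(μ.prod μ) ≤ ∑' n, δ n := by
    simp only [s]
    rw [lintegral_tsum fun n => (hm n).aemeasurable]
    exact ENNReal.tsum_le_tsum fun n => (hint n).le
  have hfin : ∀ᵐ p ∂(μ.prod μ), s p.1 p.2 < ∞ :=
    ae_lt_top hsm (ne_top_of_le_ne_top hsum hsint)
  obtain ⟨ρ, hρ, hρm, hρs⟩ := exists_semimetric_ae_eq_of_ennreal hsm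
    (fun x => by simp [s, (hτ _).2.1]) (fun x y => by simp only [s, (hτ _).2.2.1 x y])
    (fun x y z => by
      simp only [s]
      rw [← ENNReal.tsum_add]
      refine ENNReal.tsum_le_tsum fun n => ?_
      rw [← ENNReal.ofReal_add ((hτ n).1 _ _) ((hτ n).1 _ _)]
      exact ENNReal.ofReal_le_ofReal ((hτ n).2.2.2 x y z)) hfin
  refine (mdist_le_of_semimetric hρ hρm ?_).trans ((lintegral_congr_ae hρs).le.trans hsint)
  filter_upwards [hlim, hρs, ae_all_iff.2 hle] with p hp hρp hlep
  have hbound : ∀ n, |v n p.1 p.2 - v 0 p.1 p.2| ≤ ρ p.1 p.2 := by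
    intro n
    have h1 : |v n p.1 p.2 - v 0 p.1 p.2| ≤ ∑ m ∈ Finset.range n, τ m p.1 p.2 := by
      rw [← Finset.sum_range_sub (fun m => v m p.1 p.2)]
      refine (Finset.abs_sum_le_sum_abs _ _).trans (Finset.sum_le_sum fun m _ => ?_)
      rw [abs_sub_comm]
      exact hlep m
    refine h1.trans ?_
    rw [← ENNReal.ofReal_le_ofReal_iff (hρ.1 _ _), hρp,
      ENNReal.ofReal_sum_of_nonneg fun m _ => (hτ m).1 _ _]
    exact ENNReal.sum_le_tsum _
  exact le_of_tendsto (hp.sub_const _).abs (Eventually.of_forall hbound)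

lemma exists_semimetric_ae_eq_of_ae_tendsto [IsProbabilityMeasure μ] {f : X → X → ℝ}
    {v : ℕ → X → X → ℝ} (hv : ∀ n, IsSemimetric (v n)) (hvm : ∀ n, Measurable (uncurry (v n)))
    (hlim : ∀ᵐ p ∂(μ.prod μ), Tendsto (fun n => v n p.1 p.2) atTop (nhds (f p.1 p.2))) :
    ∃ g : X → X → ℝ, IsSemimetric g ∧ Measurable (uncurry g) ∧
      ∀ᵐ p ∂(μ.prod μ), f p.1 p.2 = g p.1 p.2 := by
  let G : X → X → ℝ≥0∞ := fun x y => limsup (fun n => ENNReal.ofReal (v n x y)) atTop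
  have hG : ∀ᵐ p ∂(μ.prod μ), G p.1 p.2 = ENNReal.ofReal (f p.1 p.2) :=
    hlim.mono fun p hp => (ENNReal.tendsto_ofReal hp).limsup_eq
  have hGm : Measurable (uncurry G) :=
    Measurable.limsup fun n => ENNReal.measurable_ofReal.comp (hvm n)
  obtain ⟨g, hg, hgm, hgG⟩ := exists_semimetric_ae_eq_of_ennreal (μ := μ) hGm
    (fun x => by simp [G, (hv _).2.1]) (fun x y => by simp only [G, (hv _).2.2.1 x y])
    (fun x y z => by
      refine le_trans (limsup_le_limsup (Eventually.of_forall fun n => ?_))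
        (limsup_add_le_ennreal _ _)
      simp only [Pi.add_apply]
      rw [← ENNReal.ofReal_add ((hv n).1 _ _) ((hv n).1 _ _)]
      exact ENNReal.ofReal_le_ofReal ((hv n).2.2.2 x y z))
    (hG.mono fun p hp => hp ▸ ENNReal.ofReal_lt_top)
  refine ⟨g, hg, hgm, ?_⟩
  filter_upwards [hlim, hG, hgG] with p h1 h2 h3
  have h4 : 0 ≤ f p.1 p.2 := ge_of_tendsto' h1 fun n => (hv n).1 _ _
  rw [← ENNReal.ofReal_eq_ofReal_iff h4 (hg.1 _ _), h3, h2]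

lemma mdist_congr_ae {f g h : X → X → ℝ} (hfg : ∀ᵐ p ∂(μ.prod μ), f p.1 p.2 = g p.1 p.2) :
    mdist μ g h ≤ mdist μ f h := by
  refine le_sInf ?_
  rintro _ ⟨τ, h1, h2, h3, rfl⟩
  refine mdist_le_of_semimetric h1 h2 ?_
  filter_upwards [hfg, h3] with p hp hp3
  rwa [← hp]

/-- A function in the `L¹`-closure of an m-precompact set is both an m-limit and an a.e. pointwise
limit of elements of that set. -/
lemma exists_mdist_lt_and_ae_tendsto [IsProbabilityMeasure μ] {M : Set (X → X → ℝ)}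
    (hM : ∀ ρ ∈ M, Measurable (uncurry ρ)) (hpre : TotallyBoundedIn (mdist μ) M)
    {f : X → X → ℝ} (hfm : Measurable (uncurry f))
    (hf : ∀ ε : ℝ≥0∞, 0 < ε → ∃ σ ∈ M, L1dist μ f σ < ε) {ε : ℝ≥0∞} (hε : 0 < ε) :
    ∃ v : ℕ → X → X → ℝ, (∀ n, v n ∈ M) ∧ mdist μ f (v 0) < ε ∧
      ∀ᵐ p ∂(μ.prod μ), Tendsto (fun n => v n p.1 p.2) atTop (nhds (f p.1 p.2)) := by
  obtain ⟨η, hη0, hη⟩ := ENNReal.lt_iff_exists_nnreal_btwn.1 hε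
  obtain ⟨δ, hδ, hδsum⟩ := ENNReal.exists_pos_sum_of_countable' (ENNReal.half_pos hη0.ne').ne' ℕ
  have hne : ∑' n, δ n ≠ ∞ := (hδsum.trans_le le_top).ne
  obtain ⟨v, hvM, hvL, hvd⟩ := exists_mdist_fast_cauchy hpre hf hδ
  have hlim := ae_tendsto_of_tsum_L1dist_ne_top hfm (fun n => hM _ (hvM n))
    (ne_top_of_le_ne_top hne (ENNReal.tsum_le_tsum fun n => (hvL n).le))
  have hsum : ∑' n, (δ n + δ n) < η := by
    rw [ENNReal.tsum_add]
    exact (ENNReal.add_lt_add hδsum hδsum).trans_eq (ENNReal.add_halves _)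
  exact ⟨v, hvM, (mdist_le_tsum_of_fast_cauchy hlim hvd (hsum.trans_le le_top).ne).trans_lt
    (hsum.trans hη), hlim⟩

end

/-- if a set `M` of admissible summable semimetrics is precompact in the
m-norm, then (a) for measurable functions, membership in the `L¹`-closure of `M` and in
the m-norm closure of `M` coincide; (b) every measurable function in this closure is
`μ×μ`-a.e. equal to an admissible semimetric; (c) for every fixed `ε > 0` the
`ε`-entropies of elements of `M` are uniformly bounded; (d) in particular, if a sequence
of admissible summable semimetrics converges in `L¹` to an admissible semimetric, then
for every `ε > 0` its `ε`-entropies are uniformly bounded. -/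
theorem statement12 {X : Type*} [MeasurableSpace X] [StandardBorelSpace X]
    (μ : Measure X) [IsProbabilityMeasure μ] (M : Set (X → X → ℝ))
    (hM : ∀ ρ ∈ M, IsSemimetric ρ ∧ Admissible μ ρ ∧
      Integrable (Function.uncurry ρ) (μ.prod μ))
    (hpre : TotallyBoundedIn (mdist μ) M) :
    (∀ f : X → X → ℝ, Measurable (Function.uncurry f) →
      ((∀ ε : ℝ≥0∞, 0 < ε → ∃ σ ∈ M, L1dist μ f σ < ε) ↔
        (∀ ε : ℝ≥0∞, 0 < ε → ∃ σ ∈ M, mdist μ f σ < ε))) ∧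
    (∀ f : X → X → ℝ, Measurable (Function.uncurry f) →
      (∀ ε : ℝ≥0∞, 0 < ε → ∃ σ ∈ M, L1dist μ f σ < ε) →
      ∃ g : X → X → ℝ, IsSemimetric g ∧ Admissible μ g ∧
        ∀ᵐ p ∂(μ.prod μ), f p.1 p.2 = g p.1 p.2) ∧
    (∀ ε : ℝ, 0 < ε → ∃ C : ℝ≥0∞, C ≠ ∞ ∧ ∀ ρ ∈ M, epsEntropy μ ρ ε ≤ C) ∧
    ∀ (u : ℕ → X → X → ℝ) (ρ : X → X → ℝ),
      (∀ n, IsSemimetric (u n) ∧ Admissible μ (u n) ∧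
        Integrable (Function.uncurry (u n)) (μ.prod μ)) →
      IsSemimetric ρ → Admissible μ ρ →
      Tendsto (fun n => L1dist μ (u n) ρ) atTop (nhds 0) →
      ∀ ε : ℝ, 0 < ε → ∃ C : ℝ≥0∞, C ≠ ∞ ∧ ∀ n, epsEntropy μ (u n) ε ≤ C := by
  have hMm : ∀ ρ ∈ M, Measurable (uncurry ρ) := fun ρ hρ => (hM ρ hρ).2.1.1
  have hposε : ∀ ε : ℝ, 0 < ε → 0 < ENNReal.ofReal (ε / 8) * ENNReal.ofReal (ε / 8) :=
    fun ε hε => ENNReal.mul_pos (ENNReal.ofReal_pos.2 (by positivity)).ne'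
      (ENNReal.ofReal_pos.2 (by positivity)).ne'
  refine ⟨fun f hfm => ⟨fun hf ε hε => ?_, fun hf ε hε => ?_⟩, fun f hfm hf => ?_,
    fun ε hε => ?_, fun u ρ hu hρ hρa hlim ε hε => ?_⟩
  · obtain ⟨v, hvM, hv, -⟩ := exists_mdist_lt_and_ae_tendsto hMm hpre hfm hf hε
    exact ⟨v 0, hvM 0, hv⟩
  · obtain ⟨σ, hσ, h⟩ := hf ε hε
    exact ⟨σ, hσ, (L1dist_le_mdist f σ).trans_lt h⟩
  · obtain ⟨v, hvM, -, hlim⟩ := exists_mdist_lt_and_ae_tendsto hMm hpre hfm hf one_pos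
    obtain ⟨g, hg, hgm, hfg⟩ := exists_semimetric_ae_eq_of_ae_tendsto
      (fun n => (hM _ (hvM n)).1) (fun n => hMm _ (hvM n)) hlim
    refine ⟨g, hg, Admissible.of_isEpsCover hgm fun ε hε => ?_, hfg⟩
    obtain ⟨w, hwM, hw, -⟩ := exists_mdist_lt_and_ae_tendsto hMm hpre hfm hf (hposε ε hε)
    obtain ⟨h1, h2, -⟩ := hM _ (hwM 0)
    obtain ⟨k, hk⟩ := h2.exists_isEpsCover h1 (ε := ε / 8) (by positivity)
    exact ⟨k, IsEpsCover.of_mdist_lt hg hgm hε hk ((mdist_congr_ae hfg).trans_lt hw)⟩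
  · obtain ⟨η, hη0, hη⟩ := ENNReal.lt_iff_exists_nnreal_btwn.1 (hposε ε hε)
    obtain ⟨T, hT, hTM⟩ := hpre (η / 2) (ENNReal.half_pos hη0.ne')
    have hC : ∀ g, ∃ C : ℝ≥0∞, C ≠ ∞ ∧ ∀ ρ ∈ M, mdist μ ρ g < η / 2 → epsEntropy μ ρ ε ≤ C := by
      intro g
      by_cases h : ∃ σ ∈ M, mdist μ σ g < η / 2
      · obtain ⟨σ, hσ, hσg⟩ := h
        obtain ⟨h1, h2, -⟩ := hM _ hσ
        obtain ⟨k, hk⟩ := h2.exists_isEpsCover h1 (ε := ε / 8) (by positivity)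
        refine ⟨_, ENNReal.ofReal_ne_top, fun ρ hρ hρg =>
          (IsEpsCover.of_mdist_lt (hM ρ hρ).1 (hMm ρ hρ) hε hk ?_).epsEntropy_le⟩
        refine (mdist_lt_add hρg hσg).trans ?_
        rwa [ENNReal.add_halves]
      · push Not at h
        exact ⟨0, ENNReal.zero_ne_top, fun ρ hρ hρg => absurd hρg (not_lt.2 (h ρ hρ))⟩
    choose C hCfin hC using hC
    refine ⟨∑ g ∈ hT.toFinset, C g, ENNReal.sum_ne_top.2 fun g _ => hCfin g, fun ρ hρ => ?_⟩
    obtain ⟨g, hgT, hg⟩ := hTM ρ hρ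
    exact (hC g ρ hρ hg).trans
      (Finset.single_le_sum (f := C) (fun _ _ => zero_le) (hT.mem_toFinset.2 hgT))
  · obtain ⟨k, hk⟩ := hρa.exists_isEpsCover hρ (ε := ε / 8) (by positivity)
    have hδ : 0 < ENNReal.ofReal (ε / 8) * ENNReal.ofReal (ε / (8 * (k + 1))) *
        ENNReal.ofReal (ε / (8 * (k + 1))) := by
      have h1 := (ENNReal.ofReal_pos.2 (show 0 < ε / 8 by positivity)).ne'
      have h2 := (ENNReal.ofReal_pos.2 (show 0 < ε / (8 * ((k : ℝ) + 1)) by positivity)).ne'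
      exact ENNReal.mul_pos (mul_ne_zero h1 h2) h2
    obtain ⟨N, hN⟩ := (hlim.eventually_lt_const hδ).exists_forall_of_atTop
    choose m hm using fun n => (hu n).2.1.exists_isEpsCover (hu n).1 hε
    refine ⟨ENNReal.ofReal (Real.logb 2 k) +
      ∑ n ∈ Finset.range N, ENNReal.ofReal (Real.logb 2 (m n)), ?_, fun n => ?_⟩
    · exact ENNReal.add_ne_top.2 ⟨ENNReal.ofReal_ne_top,
        ENNReal.sum_ne_top.2 fun _ _ => ENNReal.ofReal_ne_top⟩
    · rcases lt_or_ge n N with hn | hn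
      · refine ((hm n).epsEntropy_le.trans ?_).trans le_add_self
        exact Finset.single_le_sum (f := fun n => ENNReal.ofReal (Real.logb 2 (m n)))
          (fun _ _ => zero_le) (Finset.mem_range.2 hn)
      · exact ((IsEpsCover.of_L1dist_lt (hu n).1 (hu n).2.1.1 hρa.1 hε hk
          (hN n hn)).epsEntropy_le).trans le_self_add
end

section
/- Let (X, μ) be a standard Borel probability space, let ρ be an admissible summable semimetric on X, and let T: X → X be a measure-preserving transformation (not necessarily invertible). For k ≥ 0 set (T^k ρ)(x,y) = ρ(T^k x, T^k y), and for n ≥ 1 set ρ_n^{av} = n^{-1} Σ_{k=1}^{n} T^k ρ. If for every ε>0 the ε-entropies H_ε(ρ_n^{av}, μ), n = 1, 2, …, are uniformly bounded, then the orbit {ρ, Tρ, T²ρ, …} is precompact in the m-norm (equivalently, in L¹(X×X, μ×μ)). -/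
open MeasureTheory Filter Function Set
open scoped ENNReal

theorem exists_finite_net_of_clusters (d : ℕ → ℕ → ℝ) (hsymm : ∀ a b, d a b = d b a)
    (hd0 : ∀ a, d a a = 0)
    (hshift : ∀ a b q, d (a + q) (b + q) = d a b) {ε : ℝ} (hε : 0 < ε) (L : ℕ)
    (hL : ∀ N : ℕ, 0 < N → ∃ S ⊆ Finset.range N, N ≤ L * S.card ∧
      ∀ a ∈ S, ∀ b ∈ S, d a b < ε) :
    ∃ B : Finset ℕ, ∀ n, ∃ m ∈ B, d n m < ε := by
  have hcard : ∀ B : Finset ℕ, (∀ a ∈ B, ∀ b ∈ B, a ≠ b → ε ≤ d a b) → B.card ≤ L := by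
    intro B hB
    set m := B.sup id
    have hle : ∀ b ∈ B, b ≤ m := fun b hb => Finset.le_sup (f := id) hb
    obtain ⟨S, hSN, hNS, hS⟩ := hL (L * (m + 1) + 1) (Nat.succ_pos _)
    have hprod : B.card * S.card ≤ L * (m + 1) + 1 + (m + 1) := by
      rw [← Finset.card_product, ← Finset.card_range (L * (m + 1) + 1 + (m + 1))]
      refine Finset.card_le_card_of_injOn (fun p => p.1 + p.2) ?_ ?_
      · rintro ⟨b, s⟩ hbs
        simp only [Finset.coe_product, Set.mem_prod, Finset.mem_coe] at hbs
        have h1 := hle b hbs.1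
        have h2 := Finset.mem_range.1 (hSN hbs.2)
        simp only [Finset.coe_range, Set.mem_Iio]
        omega
      · rintro ⟨b, s⟩ hbs ⟨b', s'⟩ hbs' heq
        simp only [Finset.coe_product, Set.mem_prod, Finset.mem_coe] at hbs hbs' heq
        have hbb : b = b' := by
          by_contra hne
          have h1 := hB b hbs.1 b' hbs'.1 hne
          rw [← hshift b b' s, heq, add_comm b' s', add_comm b' s, hshift] at h1
          exact absurd (hS _ hbs'.2 _ hbs.2) (not_lt.2 h1)
        subst hbb
        simpa using heq
    by_contra hlt
    push Not at hlt
    have h3 : (L + 1) * (L * (m + 1) + 1) ≤ L * (L * (m + 1) + 1 + (m + 1)) :=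
      calc (L + 1) * (L * (m + 1) + 1) ≤ B.card * (L * S.card) := Nat.mul_le_mul hlt hNS
        _ = L * (B.card * S.card) := by ring
        _ ≤ _ := Nat.mul_le_mul_left _ hprod
    nlinarith
  by_contra hno
  push Not at hno
  have hgrow : ∀ k : ℕ, ∃ B : Finset ℕ, B.card = k ∧
      ∀ a ∈ B, ∀ b ∈ B, a ≠ b → ε ≤ d a b := by
    intro k
    induction k with
    | zero => exact ⟨∅, rfl, by simp⟩
    | succ k ih =>
      obtain ⟨B, hBk, hB⟩ := ih
      obtain ⟨n, hn⟩ := hno B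
      have hnB : n ∉ B := fun h => by
        have := hn n h
        rw [hd0] at this
        linarith
      refine ⟨insert n B, by rw [Finset.card_insert_of_notMem hnB, hBk], ?_⟩
      intro a ha b hb hab
      rcases Finset.mem_insert.1 ha with rfl | ha'
      · rcases Finset.mem_insert.1 hb with rfl | hb'
        · exact absurd rfl hab
        · exact hn b hb'
      · rcases Finset.mem_insert.1 hb with rfl | hb'
        · rw [hsymm]
          exact hn a ha'
        · exact hB a ha' b hb' hab
  obtain ⟨B, hBk, hB⟩ := hgrow (L + 1)
  have := hcard B hB
  omega

theorem IsEpsCover.exists_measurable_index {X : Type*} [MeasurableSpace X] {μ : Measure X}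
    {ρ : X → X → ℝ} {ε : ℝ} {k : ℕ} (h : IsEpsCover μ ρ ε k) :
    ∃ i : X → Fin (k + 1), Measurable i ∧ μ {x | i x = 0} < ENNReal.ofReal ε ∧
      ∀ x y, i x ≠ 0 → i x = i y → ρ x y < ε := by
  classical
  obtain ⟨A, hA, hU, hA0, hdiam⟩ := h
  have hex : ∀ x, ∃ n : ℕ, ∃ h : n < k + 1, x ∈ A ⟨n, h⟩ := fun x => by
    have hx : x ∈ ⋃ i, A i := hU ▸ Set.mem_univ x
    obtain ⟨i, hi⟩ := Set.mem_iUnion.1 hx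
    exact ⟨i, i.2, hi⟩
  have hfind : Measurable fun x => Nat.find (hex x) := by
    refine measurable_find hex fun n => ?_
    by_cases hn : n < k + 1
    · simpa [hn] using hA ⟨n, hn⟩
    · simp [hn]
  have hmem : ∀ x j, Fin.ofNat (k + 1) (Nat.find (hex x)) = j → x ∈ A j := by
    rintro x _ rfl
    obtain ⟨hlt, hx⟩ := Nat.find_spec (hex x)
    convert hx using 2
    exact Fin.ext (Nat.mod_eq_of_lt hlt)
  exact ⟨fun x => Fin.ofNat (k + 1) (Nat.find (hex x)),
    (measurable_of_countable (Fin.ofNat (k + 1))).comp hfind,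
    lt_of_le_of_lt (measure_mono fun x hx => hmem x 0 hx) hA0,
    fun x y hx hxy => hdiam _ hx x (hmem x _ rfl) y (hmem y _ hxy.symm)⟩

theorem IsSemimetric.abs_sub_le {X : Type*} {ρ : X → X → ℝ} (h : IsSemimetric ρ)
    (x y x' y' : X) : |ρ x y - ρ x' y'| ≤ ρ x x' + ρ y y' := by
  obtain ⟨-, -, hs, ht⟩ := h
  rw [abs_le]
  constructor
  · linarith [ht x' x y', ht x y y', hs x x']
  · linarith [ht x x' y, ht x' y' y, hs y y']

theorem integrable_of_mem_Icc {α : Type*} [MeasurableSpace α] {ν : Measure α}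
    [IsFiniteMeasure ν] {f : α → ℝ} {M : ℝ} (hf : Measurable f) (h0 : ∀ x, 0 ≤ f x)
    (hM : ∀ x, f x ≤ M) : Integrable f ν :=
  Integrable.of_bound hf.aestronglyMeasurable M
    (Eventually.of_forall fun x => by rw [Real.norm_of_nonneg (h0 x)]; exact hM x)

theorem integral_prod_add {X : Type*} [MeasurableSpace X] {μ : Measure X}
    [IsProbabilityMeasure μ] {u : X → ℝ} (hu : Integrable u μ) :
    Integrable (fun p : X × X => u p.1 + u p.2) (μ.prod μ) ∧
      ∫ p : X × X, (u p.1 + u p.2) ∂(μ.prod μ) = 2 * ∫ x, u x ∂μ := by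
  have h1 : Integrable (fun p : X × X => u p.1) (μ.prod μ) := hu.comp_fst μ
  have h2 : Integrable (fun p : X × X => u p.2) (μ.prod μ) := hu.comp_snd μ
  refine ⟨h1.add h2, ?_⟩
  rw [integral_add h1 h2, integral_fun_fst, integral_fun_snd]
  simp
  ring

theorem exists_cluster {X : Type*} [MeasurableSpace X] {μ : Measure X}
    [IsProbabilityMeasure μ] {F : ℕ → X → X → ℝ} (hF : ∀ n, IsSemimetric (F n))
    (hFm : ∀ n, Measurable (uncurry (F n))) {M : ℝ} (hM : ∀ n x y, F n x y ≤ M)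
    {N k : ℕ} {ε : ℝ} (hε : 0 < ε) {i : X → Fin (k + 1)} (hi : Measurable i)
    (hi0 : μ {x | i x = 0} < ENNReal.ofReal ε)
    (hdiam : ∀ x y, i x ≠ 0 → i x = i y → ∑ n ∈ Finset.range N, F n x y ≤ N * ε) :
    ∃ S ⊆ Finset.range N, N ≤ 2 * (⌊M / ε⌋₊ + 1) ^ ((k + 1) * (k + 1)) * S.card ∧
      ∀ a ∈ S, ∀ b ∈ S,
        ∫ p : X × X, |F a p.1 p.2 - F b p.1 p.2| ∂(μ.prod μ) ≤ (9 + 8 * M) * ε := by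
  classical
  have hX : Nonempty X := nonempty_of_isProbabilityMeasure μ
  have hM0 : 0 ≤ M := ((hF 0).1 hX.some hX.some).trans (hM 0 _ _)
  have hp : ∀ j, ∃ x, (∃ y, i y = j) → i x = j := fun j => by
    by_cases h : ∃ y, i y = j
    · exact ⟨h.choose, fun _ => h.choose_spec⟩
    · exact ⟨hX.some, fun h' => absurd h' h⟩
  choose p hp using hp
  have hip : ∀ x, i (p (i x)) = i x := fun x => hp _ ⟨x, rfl⟩
  set u : ℕ → X → ℝ := fun n x => F n x (p (i x)) with hu
  have hum : ∀ n, Measurable (u n) := fun n =>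
    (hFm n).comp (measurable_id.prodMk ((measurable_of_countable p).comp hi))
  have hu0 : ∀ n x, 0 ≤ u n x := fun n x => (hF n).1 _ _
  have hui : ∀ n, Integrable (u n) μ := fun n =>
    integrable_of_mem_Icc (hum n) (hu0 n) fun x => hM n _ _
  have hI0 : ∀ n, 0 ≤ ∫ x, u n x ∂μ := fun n => integral_nonneg (hu0 n)
  have hZ : MeasurableSet {x | i x = 0} := hi (measurableSet_singleton 0)
  have hsum : ∑ n ∈ Finset.range N, ∫ x, u n x ∂μ ≤ N * ((1 + M) * ε) := by
    rw [← integral_finsetSum _ fun n _ => hui n]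
    have hpt : ∀ x, ∑ n ∈ Finset.range N, u n x ≤
        N * ε + {x | i x = 0}.indicator (fun _ => N * M) x := fun x => by
      by_cases hx : i x = 0
      · rw [Set.indicator_of_mem (show x ∈ {x | i x = 0} from hx)]
        have h1 : ∑ n ∈ Finset.range N, u n x ≤ ∑ n ∈ Finset.range N, M :=
          Finset.sum_le_sum fun n _ => hM n _ _
        rw [Finset.sum_const, Finset.card_range, nsmul_eq_mul] at h1
        have : 0 ≤ N * ε := by positivity
        linarith
      · rw [Set.indicator_of_notMem (show x ∉ {x | i x = 0} from hx), add_zero]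
        exact hdiam x _ hx (hip x).symm
    have hind : Integrable ({x | i x = 0}.indicator (fun _ => (N * M : ℝ))) μ :=
      (integrable_const _).indicator hZ
    refine (integral_mono (integrable_finsetSum _ fun n _ => hui n)
      ((integrable_const _).add hind) hpt).trans ?_
    rw [integral_add' (integrable_const _) hind, integral_indicator_const _ hZ, integral_const]
    have hr : μ.real {x | i x = 0} ≤ ε := ENNReal.toReal_le_of_le_ofReal hε.le hi0.le
    simp only [probReal_univ, smul_eq_mul, one_mul]
    have : μ.real {x | i x = 0} * (N * M) ≤ ε * (N * M) :=
      mul_le_mul_of_nonneg_right hr (by positivity)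
    linarith
  set c : ℝ := 2 * ((1 + M) * ε) with hc
  have hcpos : 0 < c := by positivity
  set G := (Finset.range N).filter fun n => ∫ x, u n x ∂μ ≤ c
  have hGcard : (N : ℝ) ≤ 2 * G.card := by
    have hbad : ((Finset.range N).filter fun n => ¬ ∫ x, u n x ∂μ ≤ c).card * c ≤
        N * ((1 + M) * ε) := by
      refine le_trans ?_ hsum
      rw [← nsmul_eq_mul]
      refine (Finset.card_nsmul_le_sum _ (fun n => ∫ x, u n x ∂μ) c fun n hn => ?_).trans
        (Finset.sum_le_sum_of_subset_of_nonneg (Finset.filter_subset _ _) fun n _ _ => hI0 n)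
      exact (not_le.1 (Finset.mem_filter.1 hn).2).le
    have htot := Finset.card_filter_add_card_filter_not (s := Finset.range N)
      (fun n => ∫ x, u n x ∂μ ≤ c)
    rw [Finset.card_range] at htot
    have htot' : (G.card : ℝ) +
        ((Finset.range N).filter fun n => ¬ ∫ x, u n x ∂μ ≤ c).card = N := by
      exact_mod_cast htot
    have hb2 : 2 * (((Finset.range N).filter fun n => ¬ ∫ x, u n x ∂μ ≤ c).card : ℝ) ≤ N := by
      have h1 : 0 < (1 + M) * ε := by positivity
      refine le_of_mul_le_mul_right ?_ h1
      rw [hc] at hbad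
      linarith
    linarith
  set code : ℕ → (Fin (k + 1) × Fin (k + 1) → Fin (⌊M / ε⌋₊ + 1)) := fun n q =>
    ⟨⌊F n (p q.1) (p q.2) / ε⌋₊, Nat.lt_succ_of_le (Nat.floor_le_floor
      (div_le_div_of_nonneg_right (hM n _ _) hε.le))⟩
  obtain ⟨y, -, hy⟩ := Finset.exists_le_card_fiber_of_nsmul_le_card_of_maps_to
    (s := G) (t := Finset.univ) (f := code)
    (b := (G.card : ℝ) / ((⌊M / ε⌋₊ + 1) ^ ((k + 1) * (k + 1)) : ℕ))
    (fun _ _ => Finset.mem_univ _) Finset.univ_nonempty (by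
      rw [nsmul_eq_mul, Finset.card_univ, Fintype.card_fun, Fintype.card_prod, Fintype.card_fin,
        Fintype.card_fin]
      exact (mul_div_cancel₀ _ (by positivity)).le)
  refine ⟨G.filter fun n => code n = y,
    (Finset.filter_subset _ _).trans (Finset.filter_subset _ _), ?_, ?_⟩
  · rw [div_le_iff₀ (by positivity)] at hy
    have : (N : ℝ) ≤ (2 * (⌊M / ε⌋₊ + 1) ^ ((k + 1) * (k + 1)) *
        (G.filter fun n => code n = y).card : ℕ) := by
      push_cast at hy ⊢
      linarith
    exact_mod_cast this
  · intro a ha b hb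
    obtain ⟨haG, hay⟩ := Finset.mem_filter.1 ha
    obtain ⟨hbG, hby⟩ := Finset.mem_filter.1 hb
    have hac := (Finset.mem_filter.1 haG).2
    have hbc := (Finset.mem_filter.1 hbG).2
    have hcl : ∀ q : Fin (k + 1) × Fin (k + 1),
        |F a (p q.1) (p q.2) - F b (p q.1) (p q.2)| ≤ ε := fun q => by
      have hq : ⌊F a (p q.1) (p q.2) / ε⌋₊ = ⌊F b (p q.1) (p q.2) / ε⌋₊ :=
        congrArg Fin.val (congrFun (hay.trans hby.symm) q)
      have ha1 := Nat.floor_le (div_nonneg ((hF a).1 (p q.1) (p q.2)) hε.le)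
      have hb1 := Nat.floor_le (div_nonneg ((hF b).1 (p q.1) (p q.2)) hε.le)
      have ha2 := Nat.lt_floor_add_one (F a (p q.1) (p q.2) / ε)
      have hb2 := Nat.lt_floor_add_one (F b (p q.1) (p q.2) / ε)
      rw [hq] at ha1 ha2
      have h3 : |F a (p q.1) (p q.2) / ε - F b (p q.1) (p q.2) / ε| ≤ 1 := by
        rw [abs_le]; constructor <;> linarith
      rwa [← sub_div, abs_div, abs_of_pos hε, div_le_one hε] at h3
    obtain ⟨hai, hai'⟩ := integral_prod_add (hui a)
    obtain ⟨hbi, hbi'⟩ := integral_prod_add (hui b)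
    have hab : Integrable (fun q : X × X => (u a q.1 + u a q.2) + (u b q.1 + u b q.2))
        (μ.prod μ) := hai.add hbi
    have hle : ∫ q : X × X, |F a q.1 q.2 - F b q.1 q.2| ∂(μ.prod μ) ≤
        ∫ q : X × X, (((u a q.1 + u a q.2) + (u b q.1 + u b q.2)) + ε) ∂(μ.prod μ) := by
      refine integral_mono_of_nonneg (Eventually.of_forall fun q => abs_nonneg _)
        (hab.add (integrable_const ε)) (Eventually.of_forall fun q => ?_)
      have h1 := abs_le.1 ((hF a).abs_sub_le q.1 q.2 (p (i q.1)) (p (i q.2)))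
      have h2 := abs_le.1 ((hF b).abs_sub_le q.1 q.2 (p (i q.1)) (p (i q.2)))
      have h3 := abs_le.1 (hcl (i q.1, i q.2))
      simp only [hu] at h1 h2 h3 ⊢
      rw [abs_le]
      constructor <;> linarith
    rw [integral_add hab (integrable_const ε), integral_add hai hbi, hai', hbi'] at hle
    simp only [integral_const, probReal_univ, smul_eq_mul, one_mul] at hle
    rw [hc] at hac hbc
    nlinarith

theorem exists_dominating_of_integral_lt {X : Type*} [MeasurableSpace X] {μ : Measure X}
    [IsProbabilityMeasure μ] {σ : X → X → ℝ} (hσ : IsSemimetric σ)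
    (hσm : Measurable (uncurry σ)) {M : ℝ} (hM : ∀ x y, σ x y ≤ M)
    {k : ℕ} {ε : ℝ} (hε : 0 < ε) {i : X → Fin (k + 1)} (hi : Measurable i)
    (hi0 : μ {x | i x = 0} < ENNReal.ofReal ε)
    (hdiam : ∀ x y, i x ≠ 0 → i x = i y → σ x y < ε) :
    ∃ δ > 0, ∀ τ : X → X → ℝ, IsSemimetric τ → Measurable (uncurry τ) → (∀ x y, τ x y ≤ M) →
      ∫ p : X × X, |σ p.1 p.2 - τ p.1 p.2| ∂(μ.prod μ) < δ →
      ∃ u : X → ℝ, Measurable u ∧ (∀ x, 0 ≤ u x) ∧ Integrable u μ ∧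
        (∀ x y, |σ x y - τ x y| ≤ u x + u y) ∧ ∫ x, u x ∂μ ≤ (4 + M) * ε := by
  classical
  have hX : Nonempty X := nonempty_of_isProbabilityMeasure μ
  have hM0 : 0 ≤ M := (hσ.1 hX.some hX.some).trans (hM _ _)
  have hA : ∀ j, MeasurableSet (i ⁻¹' {j}) := fun j => hi (measurableSet_singleton j)
  obtain ⟨c, hc, hcle⟩ : ∃ c > 0, ∀ j, μ.real (i ⁻¹' {j}) ≠ 0 → c ≤ μ.real (i ⁻¹' {j}) := by
    obtain ⟨j, -, hj⟩ := Finset.exists_min_image Finset.univ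
      (fun j => if μ.real (i ⁻¹' {j}) = 0 then 1 else μ.real (i ⁻¹' {j})) Finset.univ_nonempty
    refine ⟨_, ?_, fun j' hj' => (hj j' (Finset.mem_univ _)).trans (by rw [if_neg hj'])⟩
    split_ifs with h
    · exact one_pos
    · exact lt_of_le_of_ne measureReal_nonneg (Ne.symm h)
  set Z : Set X := i ⁻¹' {j | j = 0 ∨ μ.real (i ⁻¹' {j}) = 0}
  have hZ : MeasurableSet Z := hi (Set.toFinite _).measurableSet
  have hZμ : μ.real Z ≤ ε := by
    refine ENNReal.toReal_le_of_le_ofReal hε.le (le_trans ?_ hi0.le)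
    have hsub : Z ⊆ {x | i x = 0} ∪
        ⋃ j : {j // μ.real (i ⁻¹' {j}) = 0}, i ⁻¹' {j.1} := fun x hx => by
      rcases hx with h | h
      · exact Or.inl h
      · exact Or.inr (Set.mem_iUnion.2 ⟨⟨i x, h⟩, rfl⟩)
    refine (measure_mono hsub).trans ((measure_union_le _ _).trans ?_)
    rw [measure_iUnion_null fun j => (measureReal_eq_zero_iff).1 j.2, add_zero]
  refine ⟨min (ε * c) (ε * (c * c)), by positivity, fun τ hτ hτm hτM hδ => ?_⟩
  set f : X → X → ℝ := fun x y => |σ x y - τ x y| with hf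
  have hfm : Measurable (uncurry f) := (hσm.sub hτm).abs
  have hf0 : ∀ x y, 0 ≤ f x y := fun x y => abs_nonneg _
  have hfM : ∀ x y, f x y ≤ M := fun x y =>
    abs_sub_le_of_nonneg_of_le (hσ.1 x y) (hM x y) (hτ.1 x y) (hτM x y)
  have hfi : Integrable (uncurry f) (μ.prod μ) :=
    integrable_of_mem_Icc hfm (fun p => hf0 _ _) fun p => hfM _ _
  have hfsec : ∀ x, Integrable (f x) μ := fun x =>
    integrable_of_mem_Icc (hfm.comp measurable_prodMk_left) (hf0 x) (hfM x)
  set I := ∫ p : X × X, uncurry f p ∂(μ.prod μ)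
  have hI' : I < min (ε * c) (ε * (c * c)) := hδ
  set g : X → ℝ := fun x => c⁻¹ * ∫ y, f x y ∂μ with hg
  have hg0 : ∀ x, 0 ≤ g x := fun x =>
    mul_nonneg (inv_nonneg.2 hc.le) (integral_nonneg (hf0 x))
  have hgm : Measurable g :=
    (hfm.stronglyMeasurable.integral_prod_right (ν := μ)).measurable.const_mul _
  have hgi : Integrable g μ := hfi.integral_prod_left.const_mul _
  have hgI : ∫ x, g x ∂μ ≤ ε := by
    have hfub : I = ∫ x, ∫ y, f x y ∂μ ∂μ := integral_prod _ hfi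
    rw [hg, integral_const_mul, ← hfub, inv_mul_le_iff₀ hc, mul_comm c]
    exact (hI'.trans_le (min_le_left _ _)).le
  have hind : Integrable (Z.indicator fun _ => M) μ := (integrable_const _).indicator hZ
  have hind0 : ∀ x, 0 ≤ Z.indicator (fun _ => M) x :=
    fun x => Set.indicator_nonneg (fun _ _ => hM0) x
  have h3 : Integrable (fun x => 3 * ε + Z.indicator (fun _ => M) x) μ :=
    (integrable_const _).add hind
  refine ⟨fun x => (3 * ε + Z.indicator (fun _ => M) x) + g x,
    ((measurable_const.indicator hZ).const_add _).add hgm, fun x => ?_, h3.add hgi, ?_, ?_⟩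
  · have := hind0 x
    have := hg0 x
    positivity
  · intro x y
    dsimp only
    by_cases hx : x ∈ Z
    · have h1 := hfM x y
      have h2 := hind0 y
      have h4 := hg0 x
      have h5 := hg0 y
      rw [Set.indicator_of_mem hx]
      simp only [hf] at h1
      linarith
    by_cases hy : y ∈ Z
    · have h1 := hfM x y
      have h2 := hind0 x
      have h4 := hg0 x
      have h5 := hg0 y
      rw [Set.indicator_of_mem hy]
      simp only [hf] at h1
      linarith
    rw [Set.indicator_of_notMem hx, Set.indicator_of_notMem hy]
    have hx' : i x ≠ 0 ∧ μ.real (i ⁻¹' {i x}) ≠ 0 := not_or.1 hx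
    have hy' : i y ≠ 0 ∧ μ.real (i ⁻¹' {i y}) ≠ 0 := not_or.1 hy
    set A := i ⁻¹' {i x}
    set B := i ⁻¹' {i y}
    have ha : c ≤ μ.real A := hcle _ hx'.2
    have hb : c ≤ μ.real B := hcle _ hy'.2
    have hpt : ∀ q ∈ A ×ˢ B, f x y ≤ uncurry f q + (4 * ε + (f x q.1 + f y q.2)) := by
      rintro ⟨x', y'⟩ ⟨hx1, hy1⟩
      have hσx := hdiam x x' hx'.1 (Eq.symm hx1)
      have hσy := hdiam y y' hy'.1 (Eq.symm hy1)
      have e1 := abs_le.1 (hσ.abs_sub_le x y x' y')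
      have e2 := abs_le.1 (hτ.abs_sub_le x y x' y')
      have e3 := neg_abs_le (σ x x' - τ x x')
      have e4 := neg_abs_le (σ y y' - τ y y')
      have e5 := neg_abs_le (σ x' y' - τ x' y')
      have e6 := le_abs_self (σ x' y' - τ x' y')
      simp only [hf, uncurry]
      rw [abs_le]
      constructor <;> linarith
    have hsec : Integrable (fun q : X × X => f x q.1 + f y q.2) (μ.prod μ) :=
      ((hfsec x).comp_fst μ).add ((hfsec y).comp_snd μ)
    have hsec' : Integrable (fun q : X × X => 4 * ε + (f x q.1 + f y q.2)) (μ.prod μ) :=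
      (integrable_const _).add hsec
    have hint : ∫ q in A ×ˢ B, f x y ∂(μ.prod μ) ≤
        ∫ q in A ×ˢ B, (uncurry f q + (4 * ε + (f x q.1 + f y q.2))) ∂(μ.prod μ) :=
      setIntegral_mono_on (integrable_const _).integrableOn
        (hfi.add hsec').integrableOn ((hA _).prod (hA _)) hpt
    rw [integral_add hfi.integrableOn hsec'.integrableOn,
      integral_add (integrable_const _) hsec.integrableOn,
      integral_add ((hfsec x).comp_fst μ).integrableOn ((hfsec y).comp_snd μ).integrableOn,
      setIntegral_const, setIntegral_const, ← Measure.prod_restrict,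
      integral_fun_fst, integral_fun_snd, measureReal_restrict_apply_univ,
      measureReal_restrict_apply_univ, measureReal_prod_prod, Measure.prod_restrict] at hint
    simp only [smul_eq_mul] at hint
    have h1 : ∫ q in A ×ˢ B, uncurry f q ∂(μ.prod μ) ≤ μ.real A * μ.real B * ε := by
      refine (setIntegral_le_integral hfi (Eventually.of_forall fun q => hf0 _ _)).trans
        ((hI'.trans_le (min_le_right _ _)).le.trans ?_)
      rw [mul_comm ε]
      exact mul_le_mul_of_nonneg_right (mul_le_mul ha hb hc.le (hc.le.trans ha)) hε.le
    have hset : ∀ (z : X) (C : Set X), c ≤ μ.real C →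
        ∫ w in C, f z w ∂μ ≤ μ.real C * g z := fun z C hC => by
      refine (setIntegral_le_integral (hfsec z) (Eventually.of_forall (hf0 z))).trans ?_
      calc ∫ w, f z w ∂μ = c * g z := by rw [hg]; field_simp
        _ ≤ _ := mul_le_mul_of_nonneg_right hC (hg0 z)
    have h2 := mul_le_mul_of_nonneg_left (hset x A ha) (hc.le.trans hb)
    have h4 := mul_le_mul_of_nonneg_left (hset y B hb) (hc.le.trans ha)
    have hAB : 0 < μ.real A * μ.real B := mul_pos (hc.trans_le ha) (hc.trans_le hb)
    have h5 : f x y ≤ 5 * ε + (g x + g y) := by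
      refine le_of_mul_le_mul_left ?_ hAB
      linarith
    simp only [hf] at h5
    linarith
  · rw [integral_add h3 hgi, integral_add (integrable_const _) hind,
      integral_indicator_const _ hZ, integral_const]
    simp only [probReal_univ, smul_eq_mul, one_mul]
    have := mul_le_mul_of_nonneg_right hZμ hM0
    linarith

theorem lintegral_prod_add {X : Type*} [MeasurableSpace X] {μ : Measure X}
    [IsProbabilityMeasure μ] {u : X → ℝ} (hu0 : ∀ x, 0 ≤ u x) (hu : Integrable u μ) :
    ∫⁻ p : X × X, ENNReal.ofReal (u p.1 + u p.2) ∂(μ.prod μ) =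
      ENNReal.ofReal (2 * ∫ x, u x ∂μ) := by
  obtain ⟨h1, h2⟩ := integral_prod_add hu
  rw [← h2, ofReal_integral_eq_lintegral_ofReal h1
    (Eventually.of_forall fun p => add_nonneg (hu0 _) (hu0 _))]

theorem mnorm_le_of_abs_le {X : Type*} [MeasurableSpace X] [StandardBorelSpace X]
    {μ : Measure X} [IsProbabilityMeasure μ] {f : X → X → ℝ} (hf : ∀ x, f x x = 0)
    {u : X → ℝ} (hum : Measurable u) (hu0 : ∀ x, 0 ≤ u x) (hu : Integrable u μ)
    (hfu : ∀ x y, |f x y| ≤ u x + u y) : mnorm μ f ≤ ENNReal.ofReal (2 * ∫ x, u x ∂μ) := by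
  classical
  rw [← lintegral_prod_add hu0 hu]
  refine sInf_le_of_le ⟨fun x y => if x = y then 0 else u x + u y, ⟨?_, ?_, ?_, ?_⟩, ?_, ?_, rfl⟩
    (lintegral_mono fun p => ENNReal.ofReal_le_ofReal ?_)
  · intro x y
    dsimp only
    split_ifs
    · exact le_rfl
    · exact add_nonneg (hu0 _) (hu0 _)
  · simp
  · intro x y
    simp only [eq_comm (a := x), add_comm (u x)]
  · intro x y z
    have := hu0 x
    have := hu0 y
    have := hu0 z
    by_cases hxy : x = y
    · subst hxy
      simp
    · by_cases hyz : y = z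
      · subst hyz
        simp
      · simp only [if_neg hxy, if_neg hyz]
        split_ifs <;> linarith
  · exact Measurable.ite (measurableSet_eq_fun measurable_fst measurable_snd) measurable_const
      ((hum.comp measurable_fst).add (hum.comp measurable_snd))
  · refine Eventually.of_forall fun p => ?_
    dsimp only
    by_cases h : p.1 = p.2
    · rw [if_pos h, h, hf, abs_zero]
    · rw [if_neg h]
      exact hfu _ _
  · dsimp only
    split_ifs
    · exact add_nonneg (hu0 _) (hu0 _)
    · exact le_rfl

theorem IsSemimetric.min_const {X : Type*} {ρ : X → X → ℝ} (h : IsSemimetric ρ) {M : ℝ}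
    (hM : 0 ≤ M) : IsSemimetric fun x y => min (ρ x y) M := by
  obtain ⟨h0, hd, hs, ht⟩ := h
  refine ⟨fun x y => le_min (h0 x y) hM, fun x => by simp [hd, hM], fun x y => by simp [hs x y],
    fun x y z => ?_⟩
  have h1 := h0 x y
  have h2 := h0 y z
  have h3 := ht x y z
  dsimp only
  rcases le_total (ρ x y) M with hxy | hxy
  · rcases le_total (ρ y z) M with hyz | hyz
    · rw [min_eq_left hxy, min_eq_left hyz]
      exact (min_le_left _ _).trans h3
    · rw [min_eq_right hyz]
      exact (min_le_right _ _).trans (le_add_of_nonneg_left (le_min h1 hM))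
  · rw [min_eq_right hxy]
    exact (min_le_right _ _).trans (le_add_of_nonneg_right (le_min h2 hM))

theorem IsSemimetric.comp {X Y : Type*} {ρ : X → X → ℝ} (h : IsSemimetric ρ) (T : Y → X) :
    IsSemimetric fun x y => ρ (T x) (T y) :=
  ⟨fun _ _ => h.1 _ _, fun _ => h.2.1 _, fun _ _ => h.2.2.1 _ _, fun _ _ _ => h.2.2.2 _ _ _⟩

theorem exists_truncation {X : Type*} [MeasurableSpace X] {μ : Measure X}
    [IsProbabilityMeasure μ] {ρ : X → X → ℝ} (hρ : IsSemimetric ρ)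
    (hρm : Measurable (uncurry ρ)) (hint : Integrable (uncurry ρ) (μ.prod μ))
    {η : ℝ} (hη : 0 < η) :
    ∃ M : ℝ, 0 ≤ M ∧ ∃ w : X → ℝ, Measurable w ∧ (∀ x, 0 ≤ w x) ∧ Integrable w μ ∧
      (∀ x y, ρ x y - min (ρ x y) M ≤ w x + w y) ∧ ∫ x, w x ∂μ < η := by
  obtain ⟨x₀, hx₀⟩ := hint.prod_right_ae.exists
  have hhm : Measurable (ρ x₀) := hρm.comp measurable_prodMk_left
  have hlim : Tendsto (fun n : ℕ => ∫ x, (ρ x₀ x - min (ρ x₀ x) n) ∂μ) atTop (nhds 0) := by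
    rw [← integral_zero X ℝ (μ := μ)]
    refine tendsto_integral_of_dominated_convergence (ρ x₀) (fun n =>
      (hhm.sub (hhm.min measurable_const)).aestronglyMeasurable) hx₀ (fun n => ?_) ?_
    · refine Eventually.of_forall fun x => ?_
      rw [Real.norm_of_nonneg (sub_nonneg.2 (min_le_left _ _))]
      exact sub_le_self _ (le_min (hρ.1 _ _) (Nat.cast_nonneg n))
    · refine Eventually.of_forall fun x => tendsto_const_nhds.congr' ?_
      obtain ⟨m, hm⟩ := exists_nat_ge (ρ x₀ x)
      filter_upwards [eventually_ge_atTop m] with n hn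
      rw [min_eq_left (hm.trans (Nat.cast_le.2 hn)), sub_self]
  obtain ⟨n, hn⟩ := (hlim.eventually (gt_mem_nhds hη)).exists
  refine ⟨2 * n, by positivity, fun x => ρ x₀ x - min (ρ x₀ x) n,
    hhm.sub (hhm.min measurable_const), fun x => sub_nonneg.2 (min_le_left _ _),
    hx₀.sub (hx₀.inf (integrable_const _)), fun x y => ?_, hn⟩
  have h1 := hρ.2.2.2 x x₀ y
  rw [hρ.2.2.1 x x₀] at h1
  rcases min_choice (ρ x y) (2 * n) with h | h
  · rw [h, sub_self]
    exact add_nonneg (sub_nonneg.2 (min_le_left _ _)) (sub_nonneg.2 (min_le_left _ _))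
  · rw [h]
    linarith [min_le_right (ρ x₀ x) n, min_le_right (ρ x₀ y) n]

theorem exists_isEpsCover_of_epsEntropy_le {X ι : Type*} [MeasurableSpace X] {μ : Measure X}
    {r : ι → X → X → ℝ} {p : ι → Prop} {ε : ℝ} {C : ℝ≥0∞} (hC : C ≠ ∞)
    (h : ∀ n, p n → epsEntropy μ (r n) ε ≤ C) :
    ∃ K : ℕ, ∀ n, p n → ∃ k ≤ K, IsEpsCover μ (r n) ε k := by
  refine ⟨⌈(2 : ℝ) ^ (C + 1).toReal⌉₊, fun n hn => ?_⟩
  have hlt : epsEntropy μ (r n) ε < C + 1 :=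
    (h n hn).trans_lt (ENNReal.lt_add_right hC one_ne_zero)
  obtain ⟨_, ⟨k, hk, rfl⟩, hkC⟩ := sInf_lt_iff.1 hlt
  refine ⟨k, ?_, hk⟩
  rcases Nat.eq_zero_or_pos k with rfl | hk0
  · exact Nat.zero_le _
  have hC1 : C + 1 ≠ ∞ := ENNReal.add_ne_top.2 ⟨hC, ENNReal.one_ne_top⟩
  have h1 : Real.logb 2 k < (C + 1).toReal := (ENNReal.ofReal_lt_iff_lt_toReal
    (Real.logb_nonneg one_lt_two (by exact_mod_cast hk0)) hC1).1 hkC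
  have h2 : (k : ℝ) < 2 ^ (C + 1).toReal :=
    (Real.logb_lt_iff_lt_rpow one_lt_two (by exact_mod_cast hk0)).1 h1
  exact_mod_cast h2.le.trans (Nat.le_ceil _)

theorem exists_finite_dominated_net {X : Type*} [MeasurableSpace X] {μ : Measure X}
    [IsProbabilityMeasure μ] {T : X → X} (hT : MeasurePreserving T μ μ)
    {ρ : X → X → ℝ} (hρ : IsSemimetric ρ) (hρm : Measurable (uncurry ρ))
    (hint : Integrable (uncurry ρ) (μ.prod μ))
    (hent : ∀ ε : ℝ, 0 < ε → ∃ C : ℝ≥0∞, C ≠ ∞ ∧ ∀ n : ℕ, 1 ≤ n →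
      epsEntropy μ
        (fun x y => (∑ k ∈ Finset.range n, ρ (T^[k + 1] x) (T^[k + 1] y)) / n) ε ≤ C)
    {η : ℝ} (hη : 0 < η) :
    ∃ B : Finset ℕ, ∀ n, ∃ m ∈ B, ∃ u : X → ℝ, Measurable u ∧ (∀ x, 0 ≤ u x) ∧
      Integrable u μ ∧
      (∀ x y, |ρ (T^[n] x) (T^[n] y) - ρ (T^[m] x) (T^[m] y)| ≤ u x + u y) ∧
      ∫ x, u x ∂μ < η := by
  obtain ⟨M, hM0, w, hwm, hw0, hwi, hρw, hwI⟩ :=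
    exists_truncation hρ hρm hint (show 0 < η / 4 by positivity)
  have hTn : ∀ n, MeasurePreserving T^[n] μ μ := fun n => hT.iterate n
  have hcomp : ∀ (v : X → ℝ) (n : ℕ), Measurable v →
      ∫ x, v (T^[n] x) ∂μ = ∫ x, v x ∂μ := fun v n hv => by
    conv_rhs => rw [← (hTn n).map_eq]
    rw [integral_map (hTn n).aemeasurable hv.aestronglyMeasurable]
  have hcompi : ∀ (v : X → ℝ) (n : ℕ), Integrable v μ → Integrable (fun x => v (T^[n] x)) μ :=
    fun v n hv => (hTn n).integrable_comp_of_integrable hv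
  set σ : X → X → ℝ := fun x y => min (ρ x y) M with hσdef
  have hσ : IsSemimetric σ := hρ.min_const hM0
  have hσm : Measurable (uncurry σ) := hρm.min measurable_const
  set F : ℕ → X → X → ℝ := fun n x y => σ (T^[n] x) (T^[n] y) with hFdef
  have hF : ∀ n, IsSemimetric (F n) := fun n => hσ.comp _
  have hFm : ∀ n, Measurable (uncurry (F n)) := fun n =>
    hσm.comp ((hTn n).measurable.prodMap (hTn n).measurable)
  have hFM : ∀ n x y, F n x y ≤ M := fun n x y => min_le_right _ _
  have hcover : ∀ ε : ℝ, 0 < ε → ∃ K : ℕ, ∀ n : ℕ, 1 ≤ n → ∃ k ≤ K, ∃ i : X → Fin (k + 1),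
      Measurable i ∧ μ {x | i x = 0} < ENNReal.ofReal ε ∧
      ∀ x y, i x ≠ 0 → i x = i y → ∑ j ∈ Finset.range n, F (j + 1) x y < n * ε := by
    intro ε hε
    obtain ⟨C, hC, hCn⟩ := hent ε hε
    obtain ⟨K, hK⟩ := exists_isEpsCover_of_epsEntropy_le hC hCn
    refine ⟨K, fun n hn => ?_⟩
    obtain ⟨k, hkK, hk⟩ := hK n hn
    obtain ⟨i, hi, hi0, hdiam⟩ := hk.exists_measurable_index
    refine ⟨k, hkK, i, hi, hi0, fun x y hx hxy => ?_⟩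
    have hn0 : (0 : ℝ) < n := by exact_mod_cast hn
    have h1 := hdiam x y hx hxy
    rw [div_lt_iff₀ hn0] at h1
    refine lt_of_le_of_lt (Finset.sum_le_sum fun j _ => min_le_left _ _) ?_
    linarith
  set d : ℕ → ℕ → ℝ := fun a b => ∫ p : X × X, |F a p.1 p.2 - F b p.1 p.2| ∂(μ.prod μ) with hd
  have hshift : ∀ a b q, d (a + q) (b + q) = d a b := fun a b q => by
    have hmp : MeasurePreserving (Prod.map T^[q] T^[q]) (μ.prod μ) (μ.prod μ) :=
      (hTn q).prod (hTn q)
    have hmeas : Measurable fun p : X × X => |F a p.1 p.2 - F b p.1 p.2| :=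
      ((hFm a).sub (hFm b)).abs
    simp only [hd]
    conv_rhs => rw [← hmp.map_eq]
    rw [integral_map hmp.aemeasurable hmeas.aestronglyMeasurable]
    simp only [hFdef, iterate_add_apply, Prod.map_fst, Prod.map_snd]
  have hsymm : ∀ a b, d a b = d b a := fun a b => by
    simp only [hd, abs_sub_comm]
  have hd0 : ∀ a, d a a = 0 := fun a => by simp [hd]
  obtain ⟨δ, hδ, hdom⟩ : ∃ δ > 0, ∀ r, d 1 (1 + r) < δ → ∃ u : X → ℝ, Measurable u ∧
      (∀ x, 0 ≤ u x) ∧ Integrable u μ ∧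
      (∀ x y, |F 1 x y - F (1 + r) x y| ≤ u x + u y) ∧ ∫ x, u x ∂μ ≤ η / 4 := by
    have he : 0 < η / (4 * (4 + M)) := by positivity
    obtain ⟨K, hK⟩ := hcover _ he
    obtain ⟨k, -, i, hi, hi0, hdiam⟩ := hK 1 le_rfl
    obtain ⟨δ, hδ, h⟩ := exists_dominating_of_integral_lt (hF 1) (hFm 1) (hFM 1) he hi hi0
      (by simpa using hdiam)
    refine ⟨δ, hδ, fun r hr => ?_⟩
    obtain ⟨u, h1, h2, h3, h4, h5⟩ := h (F (1 + r)) (hF _) (hFm _) (hFM _) hr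
    refine ⟨u, h1, h2, h3, h4, h5.trans (le_of_eq ?_)⟩
    field_simp
  obtain ⟨B, hB⟩ : ∃ B : Finset ℕ, ∀ n, ∃ m ∈ B, d n m < δ := by
    have he : 0 < δ / (2 * (9 + 8 * M)) := by positivity
    obtain ⟨K, hK⟩ := hcover _ he
    refine exists_finite_net_of_clusters d hsymm hd0 hshift hδ
      (2 * (⌊M / (δ / (2 * (9 + 8 * M)))⌋₊ + 1) ^ ((K + 1) * (K + 1))) fun N hN => ?_
    obtain ⟨k, hkK, i, hi, hi0, hdiam⟩ := hK N hN
    obtain ⟨S, hSN, hcard, hS⟩ := exists_cluster (fun n => hF (n + 1)) (fun n => hFm (n + 1))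
      (fun n => hFM (n + 1)) he hi hi0 fun x y hx hxy => (hdiam x y hx hxy).le
    refine ⟨S, hSN, hcard.trans ?_, fun a ha b hb => ?_⟩
    · gcongr
      exact Nat.le_add_left 1 _
    · rw [← hshift a b 1]
      refine (hS a ha b hb).trans_lt ?_
      have : (9 + 8 * M) * (δ / (2 * (9 + 8 * M))) = δ / 2 := by field_simp
      rw [this]
      exact half_lt_self hδ
  have hpair : ∀ a r, d (a + 1) (a + 1 + r) < δ → ∃ u : X → ℝ, Measurable u ∧
      (∀ x, 0 ≤ u x) ∧ Integrable u μ ∧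
      (∀ x y, |F (a + 1) x y - F (a + 1 + r) x y| ≤ u x + u y) ∧ ∫ x, u x ∂μ ≤ η / 4 := by
    intro a r h
    rw [show a + 1 + r = (1 + r) + a by ring, add_comm a 1, hshift] at h
    obtain ⟨u, h1, h2, h3, h4, h5⟩ := hdom r h
    refine ⟨fun x => u (T^[a] x), h1.comp (hTn a).measurable, fun x => h2 _, hcompi u a h3,
      fun x y => ?_, by rwa [hcomp u a h1]⟩
    have := h4 (T^[a] x) (T^[a] y)
    simp only [hFdef, ← iterate_add_apply] at this
    rwa [show 1 + r + a = a + 1 + r by ring, add_comm 1 a] at this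
  refine ⟨insert 0 (B.image (· + 1)), fun n => ?_⟩
  rcases n with _ | n
  · exact ⟨0, Finset.mem_insert_self _ _, fun _ => 0, measurable_const, fun _ => le_rfl,
      integrable_zero _ _ _, by simp, by simpa using hη⟩
  obtain ⟨m, hmB, hm⟩ := hB n
  obtain ⟨u, h1, h2, h3, h4, h5⟩ : ∃ u : X → ℝ, Measurable u ∧ (∀ x, 0 ≤ u x) ∧
      Integrable u μ ∧ (∀ x y, |F (n + 1) x y - F (m + 1) x y| ≤ u x + u y) ∧
      ∫ x, u x ∂μ ≤ η / 4 := by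
    rw [← hshift n m 1] at hm
    rcases le_total n m with h | h
    · obtain ⟨r, rfl⟩ := Nat.exists_eq_add_of_le h
      rw [show n + r + 1 = n + 1 + r by ring] at hm ⊢
      exact hpair n r hm
    · obtain ⟨r, rfl⟩ := Nat.exists_eq_add_of_le h
      rw [hsymm, show m + r + 1 = m + 1 + r by ring] at hm
      rw [show m + r + 1 = m + 1 + r by ring]
      simp_rw [abs_sub_comm (F (m + 1 + r) _ _)]
      exact hpair m r hm
  have hi1 := hcompi w (n + 1) hwi
  have hi2 := hcompi w (m + 1) hwi
  have hi12 : Integrable (fun x => w (T^[n + 1] x) + w (T^[m + 1] x)) μ := hi1.add hi2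
  refine ⟨m + 1, Finset.mem_insert_of_mem (Finset.mem_image_of_mem _ hmB),
    fun x => u x + (w (T^[n + 1] x) + w (T^[m + 1] x)),
    h1.add ((hwm.comp (hTn _).measurable).add (hwm.comp (hTn _).measurable)),
    fun x => add_nonneg (h2 x) (add_nonneg (hw0 _) (hw0 _)), h3.add hi12, fun x y => ?_, ?_⟩
  · have e1 := abs_le.1 (h4 x y)
    have e2 := hρw (T^[n + 1] x) (T^[n + 1] y)
    have e3 := hρw (T^[m + 1] x) (T^[m + 1] y)
    have e4 : F (n + 1) x y ≤ ρ (T^[n + 1] x) (T^[n + 1] y) := min_le_left _ _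
    have e5 : F (m + 1) x y ≤ ρ (T^[m + 1] x) (T^[m + 1] y) := min_le_left _ _
    have e6 := hw0 (T^[n + 1] x)
    have e7 := hw0 (T^[n + 1] y)
    have e8 := hw0 (T^[m + 1] x)
    have e9 := hw0 (T^[m + 1] y)
    simp only [hFdef, hσdef] at e1 e4 e5
    rw [abs_le]
    constructor <;> linarith
  · rw [integral_add h3 hi12, integral_add hi1 hi2, hcomp w _ hwm, hcomp w _ hwm]
    linarith

/-- let `ρ` be an admissible summable semimetric and `T` a measure-preserving
transformation (not necessarily invertible). If for every `ε > 0` the `ε`-entropies of the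
averages `ρ_n^{av} = n⁻¹ ∑_{k=1}^n T^k ρ` are uniformly bounded in `n`, then the orbit
`{ρ, Tρ, T²ρ, …}` is precompact in the m-norm, and equivalently in `L¹(X×X, μ×μ)`. -/
theorem statement14 {X : Type*} [MeasurableSpace X] [StandardBorelSpace X]
    (μ : Measure X) [IsProbabilityMeasure μ] (T : X → X) (hT : MeasurePreserving T μ μ)
    (ρ : X → X → ℝ) (hρ : IsSemimetric ρ) (hadm : Admissible μ ρ)
    (hint : Integrable (Function.uncurry ρ) (μ.prod μ))
    (hent : ∀ ε : ℝ, 0 < ε → ∃ C : ℝ≥0∞, C ≠ ∞ ∧ ∀ n : ℕ, 1 ≤ n →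
      epsEntropy μ
        (fun x y => (∑ k ∈ Finset.range n, ρ (T^[k + 1] x) (T^[k + 1] y)) / n) ε ≤ C) :
    TotallyBoundedIn (mdist μ)
        {σ | ∃ n : ℕ, σ = fun x y => ρ (T^[n] x) (T^[n] y)} ∧
      TotallyBoundedIn (L1dist μ)
        {σ | ∃ n : ℕ, σ = fun x y => ρ (T^[n] x) (T^[n] y)} := by
  have key : ∀ ε : ℝ≥0∞, 0 < ε → ∃ B : Finset ℕ, ∀ n, ∃ m ∈ B, ∃ u : X → ℝ, Measurable u ∧
      (∀ x, 0 ≤ u x) ∧ Integrable u μ ∧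
      (∀ x y, |ρ (T^[n] x) (T^[n] y) - ρ (T^[m] x) (T^[m] y)| ≤ u x + u y) ∧
      ENNReal.ofReal (2 * ∫ x, u x ∂μ) < ε := by
    intro ε hε
    obtain ⟨η, hη, hηε⟩ := ENNReal.lt_iff_exists_real_btwn.1 hε |>.imp fun _ h => h.2
    have hη0 := ENNReal.ofReal_pos.1 hη
    obtain ⟨B, hB⟩ := exists_finite_dominated_net hT hρ hadm.1 hint hent (half_pos hη0)
    refine ⟨B, fun n => ?_⟩
    obtain ⟨m, hm, u, h1, h2, h3, h4, h5⟩ := hB n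
    exact ⟨m, hm, u, h1, h2, h3, h4,
      (ENNReal.ofReal_le_ofReal (by linarith)).trans_lt hηε⟩
  constructor
  all_goals
    intro ε hε
    obtain ⟨B, hB⟩ := key ε hε
    refine ⟨(fun m x y => ρ (T^[m] x) (T^[m] y)) '' (B : Set ℕ), B.finite_toSet.image _, ?_⟩
    rintro _ ⟨n, rfl⟩
    obtain ⟨m, hm, u, h1, h2, h3, h4, h5⟩ := hB n
    refine ⟨_, ⟨m, hm, rfl⟩, lt_of_le_of_lt ?_ h5⟩
  · exact mnorm_le_of_abs_le (fun x => by simp [hρ.2.1]) h1 h2 h3 h4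
  · rw [← lintegral_prod_add h2 h3]
    exact lintegral_mono fun p => ENNReal.ofReal_le_ofReal (h4 _ _)
end
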